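/- (Corollary 4.3, heat kernel estimate, case X,Y in the positive chamber.) Uniformly over all t>0 and all X, Y ∈ C⁺, one has t^{−1−3k} e^{−(|X|²+|Y|²)/(4t)} E_k(X, Y/(2t)) ≍ t^{−1} e^{−|X−Y|²/(4t)} / [ (t+α_X α_Y)^k (t+β_X β_Y)^k (t+γ_X γ_Y)^k ]; that is, the Dunkl heat kernel p_t(X,Y), which is a fixed positive constant multiple of the left-hand side, satisfies the corresponding two-sided bound. -/

import Mathlib

open Real MeasureTheory

/-- The rank-one Dunkl kernel `E_k^{rk1}(x,v)`. -/
noncomputable def Erk1 (k x v : ℝ) : ℝ :=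
  (Real.Gamma (k + 1/2) / (Real.sqrt Real.pi * Real.Gamma k)) *
    ∫ z in (-1 : ℝ)..1, Real.exp (z * x * v) * (1 - z) ^ (k - 1) * (1 + z) ^ k

/-- The normalized modified Bessel function `𝒥_a(y)`, for `a > -1/2`. -/
noncomputable def besselJ (a y : ℝ) : ℝ :=
  (Real.Gamma (a + 1) / (Real.sqrt Real.pi * Real.Gamma (a + 1/2))) *
    ∫ z in (-1 : ℝ)..1, Real.exp (y * z) * (1 - z ^ 2) ^ (a - 1/2)

/-- `W_k(λ,ν)`. -/
noncomputable def Wk (k l1 l2 l3 n1 n2 : ℝ) : ℝ :=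
  ((l1 - n1) * (l1 - n2) * (n1 - l2) * (l2 - n2) * (n1 - l3) * (n2 - l3)) ^ (k - 1)

/-- `V(λ) = (λ1-λ2)(λ1-λ3)(λ2-λ3)`. -/
def Vlam (l1 l2 l3 : ℝ) : ℝ := (l1 - l2) * (l1 - l3) * (l2 - l3)

/-- The `A₂` Dunkl kernel `E_k(X,λ)`, defined via the rank-one kernel formula. -/
noncomputable def EkA2 (k x1 x2 x3 l1 l2 l3 : ℝ) : ℝ :=
  (3 * Real.Gamma (3 * k) / (Vlam l1 l2 l3 ^ (2 * k) * Real.Gamma k ^ 2)) *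
    ∫ n2 in l3..l2, ∫ n1 in l2..l1,
      ((n1 - l2) * (l1 - n2) * Erk1 k ((x1 - x2) / 2) (n1 - n2)
        + (l1 - n1) * (l2 - n2) * Erk1 k (-(x1 - x2) / 2) (n1 - n2))
      * ((n1 - l3) * (n2 - l3)) * Real.exp ((x1 + x2 - 2 * x3) * (n1 + n2) / 2)
      * Wk k l1 l2 l3 n1 n2


lemma aux_poly_exp (p : ℝ) (hp : 0 ≤ p) :
    ∃ C : ℝ, 0 < C ∧ ∀ x : ℝ, 0 ≤ x → (1 + x) ^ p ≤ C * Real.exp (x / 2) := by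
  have hq : (0:ℝ) < 2 * p + 1 := by linarith
  refine ⟨(2 * p + 1) ^ p, Real.rpow_pos_of_pos hq p, fun x hx => ?_⟩
  have h1 : 1 + x ≤ (2 * p + 1) * Real.exp (x / (2 * p + 1)) := by
    have := Real.add_one_le_exp (x / (2 * p + 1))
    have h2 : (2 * p + 1) * (x / (2 * p + 1) + 1) ≤ (2 * p + 1) * Real.exp (x / (2 * p + 1)) :=
      mul_le_mul_of_nonneg_left this hq.le
    have h3 : (2 * p + 1) * (x / (2 * p + 1) + 1) = x + (2 * p + 1) := by field_simp
    linarith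
  calc (1 + x) ^ p ≤ ((2 * p + 1) * Real.exp (x / (2 * p + 1))) ^ p :=
        Real.rpow_le_rpow (by linarith) h1 hp
    _ = (2 * p + 1) ^ p * Real.exp (x / (2 * p + 1) * p) := by
        rw [Real.mul_rpow hq.le (Real.exp_pos _).le, ← Real.exp_mul]
    _ ≤ (2 * p + 1) ^ p * Real.exp (x / 2) := by
        gcongr
        rw [div_mul_eq_mul_div, div_le_div_iff₀ hq two_pos]
        nlinarith

lemma aux_ii_le {a b : ℝ} (h : a ≤ b) {f g : ℝ → ℝ} (hf : ∀ x ∈ Set.Ioo a b, 0 ≤ f x)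
    (hfg : ∀ x ∈ Set.Ioo a b, f x ≤ g x) (hg : IntervalIntegrable g volume a b) :
    ∫ x in a..b, f x ≤ ∫ x in a..b, g x := by
  rw [intervalIntegral.integral_of_le h, intervalIntegral.integral_of_le h,
    integral_Ioc_eq_integral_Ioo, integral_Ioc_eq_integral_Ioo]
  have hg' : IntegrableOn g (Set.Ioo a b) volume :=
    ((intervalIntegrable_iff_integrableOn_Ioc_of_le h).1 hg).mono_set Set.Ioo_subset_Ioc_self
  refine integral_mono_of_nonneg ?_ hg' ?_
  · exact (ae_restrict_iff' measurableSet_Ioo).2 (Filter.Eventually.of_forall hf)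
  · exact (ae_restrict_iff' measurableSet_Ioo).2 (Filter.Eventually.of_forall hfg)

lemma aux_ii_nonneg {a b : ℝ} (h : a ≤ b) {f : ℝ → ℝ} (hf : ∀ x ∈ Set.Ioo a b, 0 ≤ f x) :
    0 ≤ ∫ x in a..b, f x := by
  rw [intervalIntegral.integral_of_le h, integral_Ioc_eq_integral_Ioo]
  exact setIntegral_nonneg measurableSet_Ioo hf

lemma aux_ii_ge {a b p q c : ℝ} (h1 : a ≤ p) (h2 : p ≤ q) (h3 : q ≤ b) {f : ℝ → ℝ}
    (hf : ∀ x ∈ Set.Ioo a b, 0 ≤ f x)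
    (hc : ∀ x ∈ Set.Ioo p q, c ≤ f x) (hfi : IntervalIntegrable f volume a b) :
    c * (q - p) ≤ ∫ x in a..b, f x := by
  have h : a ≤ b := by linarith
  rw [intervalIntegral.integral_of_le h, integral_Ioc_eq_integral_Ioo]
  have hf' : IntegrableOn f (Set.Ioo a b) volume :=
    ((intervalIntegrable_iff_integrableOn_Ioc_of_le h).1 hfi).mono_set Set.Ioo_subset_Ioc_self
  have hsub : Set.Ioo p q ⊆ Set.Ioo a b := Set.Ioo_subset_Ioo h1 h3
  have key : ∫ x in Set.Ioo p q, c ≤ ∫ x in Set.Ioo p q, f x :=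
    setIntegral_mono_on (by simp) (hf'.mono_set hsub) measurableSet_Ioo hc
  have k2 : ∫ x in Set.Ioo p q, f x ≤ ∫ x in Set.Ioo a b, f x :=
    setIntegral_mono_set hf'
      ((ae_restrict_iff' measurableSet_Ioo).2 (Filter.Eventually.of_forall hf)) hsub.eventuallyLE
  have k3 : ∫ x in Set.Ioo p q, c = c * (q - p) := by
    simp [h2, mul_comm]
  linarith

lemma aux_integrable {a b : ℝ} (h : a ≤ b) {f g : ℝ → ℝ} (hm : Measurable f)
    (hf : ∀ x ∈ Set.Ioo a b, 0 ≤ f x)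
    (hfg : ∀ x ∈ Set.Ioo a b, f x ≤ g x) (hg : IntervalIntegrable g volume a b) :
    IntervalIntegrable f volume a b := by
  rw [intervalIntegrable_iff_integrableOn_Ioo_of_le h] at hg ⊢
  refine Integrable.mono' hg hm.aestronglyMeasurable ?_
  refine (ae_restrict_iff' measurableSet_Ioo).2 (Filter.Eventually.of_forall fun x hx => ?_)
  rw [Real.norm_of_nonneg (hf x hx)]
  exact hfg x hx

lemma aux_gamma_int {p r A : ℝ} (hp : 0 < p) (hr : 0 < r) (hA : 0 ≤ A) :
    IntervalIntegrable (fun u => u ^ (p - 1) * Real.exp (-(r * u))) volume 0 A ∧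
    ∫ u in (0:ℝ)..A, u ^ (p - 1) * Real.exp (-(r * u)) ≤ (1 / r) ^ p * Real.Gamma p := by
  have hI : IntegrableOn (fun u : ℝ => u ^ (p - 1) * Real.exp (-(r * u))) (Set.Ioi 0) := by
    have := integrableOn_rpow_mul_exp_neg_mul_rpow (p := 1) (s := p - 1) (b := r)
      (by linarith) one_pos hr
    simpa using this
  refine ⟨?_, ?_⟩
  · rw [intervalIntegrable_iff_integrableOn_Ioc_of_le hA]
    exact hI.mono_set Set.Ioc_subset_Ioi_self
  · rw [← Real.integral_rpow_mul_exp_neg_mul_Ioi hp hr, intervalIntegral.integral_of_le hA]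
    refine setIntegral_mono_set hI ?_ Set.Ioc_subset_Ioi_self.eventuallyLE
    refine (ae_restrict_iff' measurableSet_Ioi).2 (Filter.Eventually.of_forall fun x hx => ?_)
    have : (0:ℝ) < x := hx
    positivity

lemma aux_pow_int {k A : ℝ} (hk : 0 < k) :
    IntervalIntegrable (fun u => (A - u) ^ (k - 1)) volume 0 A ∧
    ∫ u in (0:ℝ)..A, (A - u) ^ (k - 1) = A ^ k / k := by
  constructor
  · have := (intervalIntegral.intervalIntegrable_rpow' (a := 0) (b := A) (r := k - 1)
      (by linarith)).comp_sub_left A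
    simpa using this.symm
  · rw [intervalIntegral.integral_comp_sub_left (fun u => u ^ (k - 1)) A]
    rw [integral_rpow (Or.inl (by linarith))]
    simp [hk.ne']

/-- integrand of the rank one kernel -/
noncomputable def rkI (k y z : ℝ) : ℝ := Real.exp (z * y) * (1 - z) ^ (k - 1) * (1 + z) ^ k

lemma Erk1_eq (k x v : ℝ) : Erk1 k x v =
    (Real.Gamma (k + 1/2) / (Real.sqrt Real.pi * Real.Gamma k)) *
    ∫ s in (0 : ℝ)..2, rkI k (x * v) (1 - s) := by
  unfold Erk1
  congr 1
  rw [intervalIntegral.integral_comp_sub_left (fun z => rkI k (x*v) z) 1]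
  norm_num
  simp only [rkI, mul_assoc]

lemma Erk1_upper (k : ℝ) (hk : 0 < k) : ∃ C : ℝ, 0 < C ∧ ∀ x v : ℝ,
    0 ≤ v → Erk1 k x v ≤ C * (Real.exp (|x| * v) / (1 + |x| * v) ^ k) := by
  obtain ⟨C1, hC1, h1⟩ := aux_poly_exp k hk.le
  have hG := Real.Gamma_pos_of_pos hk
  have hG2 : 0 < Real.Gamma (k + 1/2) := Real.Gamma_pos_of_pos (by linarith)
  have hpi := Real.pi_pos
  set D : ℝ := 2 ^ k * Real.exp 2 * Real.Gamma k + 2 ^ k * C1 * (2 ^ k / k) with hD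
  have hDp : 0 < D := by positivity
  refine ⟨(Real.Gamma (k + 1/2) / (Real.sqrt Real.pi * Real.Gamma k)) * D, by positivity,
    fun x v hv => ?_⟩
  rw [Erk1_eq, mul_assoc]
  refine mul_le_mul_of_nonneg_left ?_ (by positivity)
  set y := |x| * v with hy
  have hy0 : 0 ≤ y := by positivity
  have hnn : ∀ Y, ∀ s ∈ Set.Ioo (0:ℝ) 2, 0 ≤ rkI k Y (1 - s) := by
    intro Y s hs
    have e1 : (0:ℝ) < 1 - (1 - s) := by linarith [hs.1]
    have e2 : (0:ℝ) < 1 + (1 - s) := by linarith [hs.2]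
    unfold rkI; positivity
  have hyk : (0:ℝ) < (1 + y) ^ k := by positivity
  rcases le_total 0 x with hx | hx
  · have hxy : x * v = y := by rw [hy, abs_of_nonneg hx]
    rw [hxy]
    obtain ⟨gi, gb⟩ := aux_gamma_int (p := k) (r := 1 + y) (A := 2) hk (by linarith) (by norm_num)
    calc ∫ s in (0 : ℝ)..2, rkI k y (1 - s)
        ≤ ∫ s in (0 : ℝ)..2, (Real.exp y * 2 ^ k * Real.exp 2) *
            (s ^ (k - 1) * Real.exp (-((1 + y) * s))) := by
          refine aux_ii_le (by norm_num) (hnn y) ?_ (gi.const_mul _)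
          intro s hs
          have e1 : (0:ℝ) < s := hs.1
          have e2 : (0:ℝ) < 1 + (1 - s) := by linarith [hs.2]
          have e3 : (1 + (1 - s)) ^ k ≤ 2 ^ k := Real.rpow_le_rpow e2.le (by linarith) hk.le
          have e4 : Real.exp ((1 - s) * y) ≤ Real.exp y * Real.exp 2 * Real.exp (-((1 + y) * s)) := by
            rw [← Real.exp_add, ← Real.exp_add]
            apply Real.exp_le_exp.2
            nlinarith [hs.2]
          have e5 : (1 - (1 - s)) = s := by ring
          unfold rkI
          rw [e5]
          calc _ ≤ (Real.exp y * Real.exp 2 * Real.exp (-((1 + y) * s))) * s ^ (k - 1) * 2 ^ k := by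
                gcongr
            _ = _ := by ring
      _ = (Real.exp y * 2 ^ k * Real.exp 2) * ∫ s in (0 : ℝ)..2,
            (s ^ (k - 1) * Real.exp (-((1 + y) * s))) := by
          rw [intervalIntegral.integral_const_mul]
      _ ≤ (Real.exp y * 2 ^ k * Real.exp 2) * ((1 / (1 + y)) ^ k * Real.Gamma k) := by
          gcongr
      _ = (2 ^ k * Real.exp 2 * Real.Gamma k) * (Real.exp y / (1 + y) ^ k) := by
          rw [Real.div_rpow zero_le_one (by linarith), Real.one_rpow]; ring
      _ ≤ _ := by
          gcongr
          rw [hD]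
          have : 0 ≤ 2 ^ k * C1 * (2 ^ k / k) := by positivity
          linarith
  · have hxy : x * v = -y := by rw [hy, abs_of_nonpos hx]; ring
    rw [hxy]
    have gi : IntervalIntegrable (fun u : ℝ => u ^ (k - 1)) volume 0 2 :=
      intervalIntegral.intervalIntegrable_rpow' (by linarith)
    calc ∫ s in (0 : ℝ)..2, rkI k (-y) (1 - s)
        ≤ ∫ s in (0 : ℝ)..2, (Real.exp y / (1 + y) ^ k * 2 ^ k * C1) * (s ^ (k - 1)) := by
          refine aux_ii_le (by norm_num) (hnn (-y)) ?_ (gi.const_mul _)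
          intro s hs
          have e1 : (0:ℝ) < s := hs.1
          set r := 1 + (1 - s) with hr
          have e2 : (0:ℝ) < r := by linarith [hs.2]
          have e2' : r ≤ 2 := by linarith [hs.1]
          have e4 : Real.exp ((1 - s) * -y) = Real.exp y * Real.exp (-(r * y)) := by
            rw [← Real.exp_add]; congr 1; rw [hr]; ring
          have e5 : (1 - (1 - s)) = s := by ring
          have e6 : Real.exp (-(r * y)) * r ^ k ≤ 2 ^ k * C1 / (1 + y) ^ k := by
            rw [le_div_iff₀ hyk]
            calc Real.exp (-(r * y)) * r ^ k * (1 + y) ^ k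
                = Real.exp (-(r * y)) * (r * (1 + y)) ^ k := by
                  rw [Real.mul_rpow e2.le (by linarith)]; ring
              _ ≤ Real.exp (-(r * y)) * (2 * (1 + r * y)) ^ k := by
                  refine mul_le_mul_of_nonneg_left ?_ (Real.exp_pos _).le
                  refine Real.rpow_le_rpow (by positivity) ?_ hk.le
                  nlinarith [mul_nonneg e2.le hy0]
              _ = Real.exp (-(r * y)) * (2 ^ k * (1 + r * y) ^ k) := by
                  rw [Real.mul_rpow two_pos.le (by positivity)]
              _ ≤ Real.exp (-(r * y)) * (2 ^ k * (C1 * Real.exp (r * y / 2))) := by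
                  gcongr
                  exact h1 _ (by positivity)
              _ = 2 ^ k * C1 * (Real.exp (-(r * y)) * Real.exp (r * y / 2)) := by ring
              _ ≤ 2 ^ k * C1 * 1 := by
                  gcongr
                  rw [← Real.exp_add]
                  apply Real.exp_le_one_iff.2
                  nlinarith [mul_nonneg e2.le hy0]
              _ = _ := by ring
          unfold rkI
          rw [e5, e4]
          calc _ = Real.exp y * s ^ (k - 1) * (Real.exp (-(r * y)) * r ^ k) := by ring
            _ ≤ Real.exp y * s ^ (k - 1) * (2 ^ k * C1 / (1 + y) ^ k) := by gcongr
            _ = _ := by ring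
      _ = (Real.exp y / (1 + y) ^ k * 2 ^ k * C1) * (2 ^ k / k) := by
          rw [intervalIntegral.integral_const_mul, integral_rpow (Or.inl (by linarith))]
          simp [hk.ne']
      _ = (2 ^ k * C1 * (2 ^ k / k)) * (Real.exp y / (1 + y) ^ k) := by ring
      _ ≤ _ := by
          gcongr
          rw [hD]
          have : 0 ≤ 2 ^ k * Real.exp 2 * Real.Gamma k := by positivity
          linarith

lemma Erk1_nonneg (k : ℝ) (hk : 0 < k) (x v : ℝ) : 0 ≤ Erk1 k x v := by
  have hG := Real.Gamma_pos_of_pos hk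
  have hG2 : 0 < Real.Gamma (k + 1/2) := Real.Gamma_pos_of_pos (by linarith)
  rw [Erk1_eq]
  refine mul_nonneg (by positivity) (aux_ii_nonneg (by norm_num) ?_)
  intro s hs
  have e1 : (0:ℝ) < 1 - (1 - s) := by linarith [hs.1]
  have e2 : (0:ℝ) < 1 + (1 - s) := by linarith [hs.2]
  unfold rkI; positivity

lemma Erk1_lower (k : ℝ) (hk : 0 < k) : ∃ c : ℝ, 0 < c ∧ ∀ x v : ℝ,
    0 ≤ x → 0 ≤ v → c * (Real.exp (x * v) / (1 + x * v) ^ k) ≤ Erk1 k x v := by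
  have hG := Real.Gamma_pos_of_pos hk
  have hG2 : 0 < Real.Gamma (k + 1/2) := Real.Gamma_pos_of_pos (by linarith)
  have hpi := Real.pi_pos
  refine ⟨(Real.Gamma (k + 1/2) / (Real.sqrt Real.pi * Real.Gamma k)) *
    (Real.exp (-1) * (1/2) ^ k / 2), by positivity, fun x v hx hv => ?_⟩
  rw [Erk1_eq, mul_assoc]
  refine mul_le_mul_of_nonneg_left ?_ (by positivity)
  set y := x * v with hy
  have hy0 : 0 ≤ y := by positivity
  have hnn : ∀ s ∈ Set.Ioo (0:ℝ) 2, 0 ≤ rkI k y (1 - s) := by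
    intro s hs
    have e1 : (0:ℝ) < 1 - (1 - s) := by linarith [hs.1]
    have e2 : (0:ℝ) < 1 + (1 - s) := by linarith [hs.2]
    unfold rkI; positivity
  set q := 1 / (1 + y) with hq
  have hq0 : 0 < q := by positivity
  have hq1 : q ≤ 1 := by rw [hq, div_le_one (by linarith)]; linarith
  have hqy : q * (1 + y) = 1 := by rw [hq]; field_simp
  have hint : IntervalIntegrable (fun s => rkI k y (1 - s)) volume 0 2 := by
    have gi : IntervalIntegrable (fun u : ℝ => u ^ (k - 1)) volume 0 2 :=
      intervalIntegral.intervalIntegrable_rpow' (by linarith)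
    refine aux_integrable (by norm_num) ?_ hnn ?_ (gi.const_mul (Real.exp y * 2 ^ k))
    · unfold rkI; fun_prop
    · intro s hs
      have e1 : (0:ℝ) < s := hs.1
      have e2 : (0:ℝ) < 1 + (1 - s) := by linarith [hs.2]
      have e3 : (1 + (1 - s)) ^ k ≤ 2 ^ k := Real.rpow_le_rpow e2.le (by linarith) hk.le
      have e4 : Real.exp ((1 - s) * y) ≤ Real.exp y := by
        apply Real.exp_le_exp.2
        nlinarith [hs.2]
      have e5 : (1 - (1 - s)) = s := by ring
      unfold rkI
      rw [e5]
      calc _ ≤ (Real.exp y) * s ^ (k - 1) * 2 ^ k := by gcongr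
        _ = _ := by ring
  have := aux_ii_ge (p := q / 2) (q := q) (c := Real.exp y * Real.exp (-1) * ((q / 2) ^ k / q))
    (by linarith) (by linarith) (by linarith) hnn ?_ hint
  · refine le_trans (le_of_eq ?_) this
    have : (1 + y) ^ k = (q ^ k)⁻¹ := by
      rw [hq, Real.div_rpow zero_le_one (by linarith), Real.one_rpow]; simp
    rw [this, div_eq_mul_one_div q 2, Real.mul_rpow hq0.le (by norm_num)]
    field_simp
    norm_num
  · intro s hs
    have e1 : (0:ℝ) < s := by linarith [hs.1]
    have e5 : (1 - (1 - s)) = s := by ring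
    have e6 : s ^ (k - 1) = s ^ k / s := Real.rpow_sub_one e1.ne' k
    have e7 : (q / 2) ^ k ≤ s ^ k := Real.rpow_le_rpow (by positivity) hs.1.le hk.le
    have e8 : (1:ℝ) ≤ (1 + (1 - s)) ^ k := Real.one_le_rpow (by linarith [hs.2]) hk.le
    have e4 : Real.exp y * Real.exp (-1) ≤ Real.exp ((1 - s) * y) := by
      rw [← Real.exp_add]
      apply Real.exp_le_exp.2
      nlinarith [hs.2]
    unfold rkI
    rw [e5, e6]
    calc _ = Real.exp y * Real.exp (-1) * ((q / 2) ^ k / q) * 1 := by ring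
      _ ≤ Real.exp ((1 - s) * y) * (s ^ k / s) * (1 + (1 - s)) ^ k := by
        have := hs.2.le
        gcongr

lemma Erk1_measurable (k x : ℝ) : Measurable (fun v => Erk1 k x v) := by
  have : StronglyMeasurable (fun v : ℝ => ∫ s in Set.Ioc (0:ℝ) 2, rkI k (x * v) (1 - s)) := by
    apply StronglyMeasurable.integral_prod_right
      (f := fun (v s : ℝ) => rkI k (x * v) (1 - s))
    apply Measurable.stronglyMeasurable
    unfold rkI
    fun_prop
  simp only [Erk1_eq, intervalIntegral.integral_of_le (zero_le_two (α := ℝ))]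
  exact this.measurable.const_mul _

lemma alg_ineq {a b A B : ℝ} (ha : 0 < a) (hb : 0 < b) (hA : 0 < A) (hB : 0 < B) :
    (A * (1 + b * B) + B) * (1 + a * A) * (1 + (a + b) * (A + B)) ≤
      8 * ((A + B) * (1 + b * B + a * (A * (1 + b * B) + B)) * (1 + (a + b) * A)) ∧
    (A + B) * (1 + b * B + a * (A * (1 + b * B) + B)) * (1 + (a + b) * A) ≤
      8 * ((A * (1 + b * B) + B) * (1 + a * A) * (1 + (a + b) * (A + B))) := by
  constructor
  · rw [← sub_nonneg]; ring_nf; positivity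
  · rw [← sub_nonneg]; ring_nf; positivity

/-- the comparison height in `w` -/
noncomputable def w0f (b B : ℝ) : ℝ := B / (1 + b * B)

/-- the comparison factor -/
noncomputable def phf (a A w : ℝ) : ℝ := (A + w) / (1 + a * (A + w))

lemma w0f_pos {b B : ℝ} (hb : 0 < b) (hB : 0 < B) : 0 < w0f b B := by
  unfold w0f; positivity

lemma phf_pos {a A w : ℝ} (ha : 0 < a) (hA : 0 < A) (hw : 0 ≤ w) : 0 < phf a A w := by
  unfold phf; positivity

lemma w0f_le {b B : ℝ} (hb : 0 < b) (hB : 0 < B) : w0f b B ≤ B := by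
  unfold w0f
  rw [div_le_iff₀ (by positivity)]
  nlinarith [mul_pos hb (mul_pos hB hB)]

lemma w0f_mul_le {b B : ℝ} (hb : 0 < b) (hB : 0 < B) : b * w0f b B ≤ 1 := by
  unfold w0f
  rw [← mul_div_assoc, div_le_one (by positivity)]
  linarith

lemma w0f_inv {b B : ℝ} (hB : 0 < B) : 1 / w0f b B = b + 1 / B := by
  unfold w0f
  field_simp
  ring

lemma su_bound (k : ℝ) (hk : 0 < k) : ∃ C : ℝ, 0 < C ∧ ∀ c A u : ℝ, 0 < c → 0 < A → 0 < u →
    u < A → Real.exp (-(c * u)) * (1 + c * u) ^ k ≤ C * Real.exp (-(1 / (2 * w0f c A) * u)) := by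
  obtain ⟨C1, hC1, h1⟩ := aux_poly_exp k hk.le
  refine ⟨C1 * Real.exp 1, by positivity, fun c A u hc hA hu huA => ?_⟩
  have e1 : 1 / (2 * w0f c A) = (c + 1 / A) / 2 := by
    rw [← w0f_inv (b := c) hA]; field_simp
  have e2 : 1 / A * u ≤ 1 := by
    rw [one_div, inv_mul_le_iff₀ hA]; linarith
  calc Real.exp (-(c * u)) * (1 + c * u) ^ k
      ≤ Real.exp (-(c * u)) * (C1 * Real.exp (c * u / 2)) := by
        gcongr; exact h1 _ (by positivity)
    _ = C1 * Real.exp (-(c * u) / 2) := by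
        rw [mul_left_comm, ← Real.exp_add]; congr 2; ring
    _ ≤ C1 * (Real.exp 1 * Real.exp (-(1 / (2 * w0f c A) * u))) := by
        rw [← Real.exp_add]
        gcongr
        rw [e1]
        nlinarith
    _ = _ := by ring

lemma su2_bound (k : ℝ) (hk : 0 < k) : ∃ C : ℝ, 0 < C ∧ ∀ q u : ℝ, 0 < q → 0 < u →
    u ^ k * Real.exp (-(1 / (2 * q) * u)) ≤ C * q ^ k := by
  obtain ⟨C1, hC1, h1⟩ := aux_poly_exp k hk.le
  refine ⟨C1, hC1, fun q u hq hu => ?_⟩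
  have h2 := h1 (u / q) (by positivity)
  have h3 : (u / q) ^ k ≤ (1 + u / q) ^ k :=
    Real.rpow_le_rpow (by positivity) (by linarith) hk.le
  have h4 : u ^ k = q ^ k * (u / q) ^ k := by
    rw [← Real.mul_rpow hq.le (by positivity)]; congr 1; field_simp
  have h5 : Real.exp (-(1 / (2 * q) * u)) = (Real.exp (u / q / 2))⁻¹ := by
    rw [← Real.exp_neg]; congr 1; field_simp
  rw [h4, h5, ← div_eq_mul_inv, div_le_iff₀ (Real.exp_pos _)]
  calc q ^ k * (u / q) ^ k ≤ q ^ k * (C1 * Real.exp (u / q / 2)) := by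
        gcongr; exact h3.trans h2
    _ = _ := by ring

lemma phf_mono {a A w w' : ℝ} (ha : 0 < a) (hA : 0 < A) (hw : 0 < w) (h : w ≤ w') :
    phf a A w ≤ phf a A w' := by
  have hw2 : 0 < w' := by linarith
  unfold phf
  rw [div_le_div_iff₀ (by positivity) (by positivity)]
  nlinarith

lemma phf_quarter {a A q w : ℝ} (ha : 0 < a) (hA : 0 < A) (hq : 0 < q) (h : q / 4 ≤ w) :
    phf a A q / 4 ≤ phf a A w := by
  refine le_trans ?_ (phf_mono ha hA (by positivity) h)
  unfold phf
  rw [div_div, div_le_div_iff₀ (by positivity) (by positivity)]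
  rw [← sub_nonneg]; ring_nf; positivity

lemma phf_le {a A q w : ℝ} (ha : 0 < a) (hA : 0 < A) (hq : 0 < q) (hw : 0 < w) :
    phf a A w ≤ phf a A q * (1 + w / q) := by
  have h : phf a A q * (1 + w / q) = ((A + q) * (q + w)) / ((1 + a * (A + q)) * q) := by
    unfold phf; field_simp
  rw [h]
  unfold phf
  rw [div_le_div_iff₀ (by positivity) (by positivity)]
  rw [← sub_nonneg]; ring_nf; positivity

lemma sw_bound (k : ℝ) (hk : 0 < k) : ∃ C : ℝ, 0 < C ∧ ∀ a b A B w : ℝ, 0 < a → 0 < b → 0 < A →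
    0 < B → 0 < w → w < B → Real.exp (-(b * w)) * (phf a A w) ^ k ≤
      C * (phf a A (w0f b B)) ^ k * Real.exp (-(1 / (2 * w0f b B) * w)) := by
  obtain ⟨C1, hC1, h1⟩ := aux_poly_exp k hk.le
  refine ⟨Real.exp 1 * C1, by positivity, fun a b A B w ha hb hA hB hw hwB => ?_⟩
  set q := w0f b B with hq
  have hq0 : 0 < q := w0f_pos hb hB
  have hp := phf_pos ha hA hq0.le
  have hpw := phf_pos ha hA hw.le
  have e2 : 1 / B * w ≤ 1 := by
    rw [one_div, inv_mul_le_iff₀ hB]; linarith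
  have e3 : w / q = b * w + 1 / B * w := by
    rw [div_eq_mul_one_div, hq, w0f_inv (b := b) hB]; ring
  have e4 : 1 / (2 * q) * w = w / q / 2 := by field_simp
  calc Real.exp (-(b * w)) * (phf a A w) ^ k
      ≤ (Real.exp 1 * Real.exp (-(w / q))) * (phf a A q * (1 + w / q)) ^ k := by
        gcongr
        · rw [← Real.exp_add]; apply Real.exp_le_exp.2; linarith
        · exact phf_le ha hA hq0 hw
    _ = (Real.exp 1 * Real.exp (-(w / q))) * ((phf a A q) ^ k * (1 + w / q) ^ k) := by
        rw [Real.mul_rpow hp.le (by positivity)]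
    _ ≤ (Real.exp 1 * Real.exp (-(w / q))) * ((phf a A q) ^ k * (C1 * Real.exp (w / q / 2))) := by
        gcongr
        exact h1 _ (by positivity)
    _ = Real.exp 1 * C1 * (phf a A q) ^ k * (Real.exp (-(w / q)) * Real.exp (w / q / 2)) := by ring
    _ = _ := by
        rw [← Real.exp_add, e4]; congr 2; ring

/-- normalized integrand -/
noncomputable def Dn (k a b A B u w : ℝ) : ℝ :=
  ((A - u) * (A + w) * Erk1 k (a / 2) (A - u + w) + u * w * Erk1 k (-a / 2) (A - u + w))
    * ((A + B - u) * (B - w)) * Real.exp (-((a + 2 * b) / 2 * (u + w)))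
    * (u * (A + w) * (A - u) * w * (A + B - u) * (B - w)) ^ (k - 1)

lemma Dn_measurable (k a b A B : ℝ) : Measurable (fun p : ℝ × ℝ => Dn k a b A B p.1 p.2) := by
  have h1 := Erk1_measurable k (a / 2)
  have h2 := Erk1_measurable k (-a / 2)
  have hv : Measurable (fun p : ℝ × ℝ => A - p.1 + p.2) := by fun_prop
  have h3 := h1.comp hv
  have h4 := h2.comp hv
  simp only [Function.comp_def] at h3 h4
  unfold Dn
  fun_prop

lemma Dn_nonneg {k a b A B u w : ℝ} (hk : 0 < k) (hu : 0 < u) (huA : u < A)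
    (hw : 0 < w) (hwB : w < B) : 0 ≤ Dn k a b A B u w := by
  have h1 := Erk1_nonneg k hk (a / 2) (A - u + w)
  have h2 := Erk1_nonneg k hk (-a / 2) (A - u + w)
  have e1 : 0 < A - u := by linarith
  have e2 : 0 < A + w := by linarith
  have e3 : 0 < A + B - u := by linarith
  have e4 : 0 < B - w := by linarith
  unfold Dn
  positivity

lemma Dn_split {k a b A B u w : ℝ} (hu : 0 < u) (huA : u < A)
    (hw : 0 < w) (hwB : w < B) : Dn k a b A B u w =
    ((A - u) * (A + w) * Erk1 k (a / 2) (A - u + w) + u * w * Erk1 k (-a / 2) (A - u + w))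
    * Real.exp (-((a + 2 * b) / 2 * (u + w))) *
    ((u ^ (k - 1) * (A + w) ^ (k - 1) * (A - u) ^ (k - 1) * w ^ (k - 1)) *
      ((A + B - u) ^ k * (B - w) ^ k)) := by
  have e1 : 0 < A - u := by linarith
  have e2 : 0 < A + w := by linarith
  have e3 : 0 < A + B - u := by linarith
  have e4 : 0 < B - w := by linarith
  unfold Dn
  rw [Real.mul_rpow (by positivity) (by positivity), Real.mul_rpow (by positivity) (by positivity),
    Real.mul_rpow (by positivity) (by positivity), Real.mul_rpow (by positivity) (by positivity),
    Real.mul_rpow (by positivity) (by positivity)]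
  have f1 : (A + B - u) ^ k = (A + B - u) * (A + B - u) ^ (k - 1) := by
    rw [Real.rpow_sub_one e3.ne']; field_simp
  have f2 : (B - w) ^ k = (B - w) * (B - w) ^ (k - 1) := by
    rw [Real.rpow_sub_one e4.ne']; field_simp
  rw [f1, f2]
  ring

lemma Dn_upper (k : ℝ) (hk : 0 < k) : ∃ C : ℝ, 0 < C ∧ ∀ a b A B u w : ℝ, 0 < a → 0 < b → 0 < A →
    0 < B → 0 < u → u < A → 0 < w → w < B →
    Dn k a b A B u w ≤ C * Real.exp (a * A / 2) * ((A + B) ^ k * B ^ k * (phf a A (w0f b B)) ^ k) *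
      ((w0f (a + b) A) ^ k * (A - u) ^ (k - 1) +
        A ^ k * (u ^ (k - 1) * Real.exp (-(1 / (2 * w0f (a + b) A) * u)))) *
      (w ^ (k - 1) * Real.exp (-(1 / (2 * w0f b B) * w))) := by
  obtain ⟨C1, hC1, h1⟩ := Erk1_upper k hk
  obtain ⟨C2, hC2, h2⟩ := su_bound k hk
  obtain ⟨C3, hC3, h3⟩ := su2_bound k hk
  obtain ⟨C4, hC4, h4⟩ := sw_bound k hk
  refine ⟨C1 * 2 ^ k * C2 * C4 * (C3 + 1), by positivity,
    fun a b A B u w ha hb hA hB hu huA hw hwB => ?_⟩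
  have e1 : 0 < A - u := by linarith
  have e2 : 0 < A + w := by linarith
  have e3 : 0 < A + B - u := by linarith
  have e4 : 0 < B - w := by linarith
  have ev : 0 < A - u + w := by linarith
  have hc : 0 < a + b := by linarith
  have hq := w0f_pos hc hA
  have hq' := w0f_pos hb hB
  have hph := phf_pos ha hA hq'.le
  set v := A - u + w with hv
  set Q := C1 * (Real.exp (a / 2 * v) * (2 ^ k * (1 + (a + b) * u) ^ k / (1 + a * (A + w)) ^ k))
    with hQ
  have hQ0 : 0 < Q := by positivity
  have hden : 1 / (1 + a / 2 * v) ^ k ≤ 2 ^ k * (1 + (a + b) * u) ^ k / (1 + a * (A + w)) ^ k := by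
    rw [div_le_div_iff₀ (by positivity) (by positivity), one_mul,
      ← Real.mul_rpow (by positivity) (by positivity),
      ← Real.mul_rpow (by positivity) (by positivity)]
    refine Real.rpow_le_rpow (by positivity) ?_ hk.le
    have g1 : 0 < a * u := by positivity
    have g2 : 0 < b * u := by positivity
    have g3 : 0 < a * v := by positivity
    have g4 : a * (A + w) = a * u + a * v := by rw [hv]; ring
    have g5 := mul_pos g1 g3
    have g6 := mul_pos g2 g3
    rw [g4]
    nlinarith
  have hE1 : Erk1 k (a / 2) v ≤ Q := by
    have := h1 (a / 2) v ev.le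
    rw [abs_of_pos (by positivity)] at this
    refine this.trans ?_
    rw [hQ, div_eq_mul_one_div]
    gcongr
  have hE2 : Erk1 k (-a / 2) v ≤ Q := by
    have := h1 (-a / 2) v ev.le
    rw [neg_div, abs_neg, abs_of_pos (by positivity)] at this
    rw [neg_div]
    refine this.trans ?_
    rw [hQ, div_eq_mul_one_div]
    gcongr
  have hbr : (A - u) * (A + w) * Erk1 k (a / 2) v + u * w * Erk1 k (-a / 2) v ≤
      A * (A + w) * Q := by
    calc _ ≤ (A - u) * (A + w) * Q + u * w * Q := by gcongr
      _ ≤ _ := by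
        have : 0 ≤ u * A * Q := by positivity
        nlinarith
  have f1 : (A + w) ^ k = (A + w) * (A + w) ^ (k - 1) := by
    rw [Real.rpow_sub_one e2.ne']; field_simp
  have f2 : (A - u) ^ k = (A - u) * (A - u) ^ (k - 1) := by
    rw [Real.rpow_sub_one e1.ne']; field_simp
  have f3 : u ^ k = u * u ^ (k - 1) := by
    rw [Real.rpow_sub_one hu.ne']; field_simp
  have f4 : A * (u ^ (k - 1) * (A - u) ^ (k - 1)) ≤
      u ^ k * (A - u) ^ (k - 1) + A ^ k * u ^ (k - 1) := by
    calc A * (u ^ (k - 1) * (A - u) ^ (k - 1))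
        = u ^ k * (A - u) ^ (k - 1) + (A - u) ^ k * u ^ (k - 1) := by rw [f2, f3]; ring
      _ ≤ _ := by
        gcongr
        linarith
  have f5 : (A + B - u) ^ k ≤ (A + B) ^ k := Real.rpow_le_rpow e3.le (by linarith) hk.le
  have f6 : (B - w) ^ k ≤ B ^ k := Real.rpow_le_rpow e4.le (by linarith) hk.le
  have f7 : (phf a A w) ^ k = (A + w) ^ k / (1 + a * (A + w)) ^ k := by
    unfold phf
    rw [Real.div_rpow e2.le (by positivity)]
  have fe : Real.exp (a / 2 * v) * Real.exp (-((a + 2 * b) / 2 * (u + w))) =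
      Real.exp (a * A / 2) * (Real.exp (-((a + b) * u)) * Real.exp (-(b * w))) := by
    rw [← Real.exp_add, ← Real.exp_add, ← Real.exp_add]; congr 1; rw [hv]; ring
  have H2 := h2 (a + b) A u hc hA hu huA
  have H3 := h3 (w0f (a + b) A) u hq hu
  have H4 := h4 a b A B w ha hb hA hB hw hwB
  rw [Dn_split hu huA hw hwB, ← hv]
  set E1 := Real.exp (-(1 / (2 * w0f (a + b) A) * u)) with hE1d
  set E2 := Real.exp (-(1 / (2 * w0f b B) * w)) with hE2d
  have hE1p : 0 < E1 := Real.exp_pos _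
  have hE2p : 0 < E2 := Real.exp_pos _
  calc _ ≤ (A * (A + w) * Q) * Real.exp (-((a + 2 * b) / 2 * (u + w))) *
        ((u ^ (k - 1) * (A + w) ^ (k - 1) * (A - u) ^ (k - 1) * w ^ (k - 1)) *
        ((A + B) ^ k * B ^ k)) := by gcongr
    _ = C1 * 2 ^ k * ((A + B) ^ k * B ^ k) * Real.exp (a * A / 2) *
        (Real.exp (-((a + b) * u)) * (1 + (a + b) * u) ^ k) *
        (A * (u ^ (k - 1) * (A - u) ^ (k - 1))) *
        (Real.exp (-(b * w)) * (phf a A w) ^ k) * w ^ (k - 1) := by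
      rw [f7, f1, hQ]
      linear_combination (A * (A + w) * C1 * (2 ^ k * (1 + (a + b) * u) ^ k / (1 + a * (A + w)) ^ k)
        * ((u ^ (k - 1) * (A + w) ^ (k - 1) * (A - u) ^ (k - 1) * w ^ (k - 1)) *
        ((A + B) ^ k * B ^ k))) * fe
    _ ≤ C1 * 2 ^ k * ((A + B) ^ k * B ^ k) * Real.exp (a * A / 2) *
        (C2 * E1) *
        (u ^ k * (A - u) ^ (k - 1) + A ^ k * u ^ (k - 1)) *
        (C4 * (phf a A (w0f b B)) ^ k * E2) * w ^ (k - 1) := by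
      have : 0 < phf a A w := phf_pos ha hA hw.le
      gcongr
    _ = (C1 * 2 ^ k * C2 * C4) * Real.exp (a * A / 2) *
        ((A + B) ^ k * B ^ k * (phf a A (w0f b B)) ^ k) *
        ((u ^ k * E1) * (A - u) ^ (k - 1) + A ^ k * (u ^ (k - 1) * E1)) *
        (w ^ (k - 1) * E2) := by ring
    _ ≤ (C1 * 2 ^ k * C2 * C4) * Real.exp (a * A / 2) *
        ((A + B) ^ k * B ^ k * (phf a A (w0f b B)) ^ k) *
        ((C3 + 1) * ((w0f (a + b) A) ^ k * (A - u) ^ (k - 1) + A ^ k * (u ^ (k - 1) * E1))) *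
        (w ^ (k - 1) * E2) := by
      gcongr
      have g1 : (u ^ k * E1) * (A - u) ^ (k - 1) ≤
          (C3 * (w0f (a + b) A) ^ k) * (A - u) ^ (k - 1) := by gcongr
      have g2 : 0 ≤ (w0f (a + b) A) ^ k * (A - u) ^ (k - 1) := by positivity
      have g3 : 0 ≤ C3 * (A ^ k * (u ^ (k - 1) * E1)) := by positivity
      linarith
    _ = _ := by ring

lemma Dn_lower (k : ℝ) (hk : 0 < k) : ∃ c : ℝ, 0 < c ∧ ∀ a b A B u w : ℝ, 0 < a → 0 < b → 0 < A →
    0 < B → w0f (a + b) A / 4 < u → u < w0f (a + b) A / 2 → w0f b B / 4 < w → w < w0f b B / 2 →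
    c * Real.exp (a * A / 2) * (((A + B) * B * phf a A (w0f b B) * A * w0f (a + b) A * w0f b B) ^ k
      / (w0f (a + b) A * w0f b B)) ≤ Dn k a b A B u w := by
  obtain ⟨C1, hC1, h1⟩ := Erk1_lower k hk
  refine ⟨C1 * Real.exp (-1) * (1 / 512) ^ k, by positivity,
    fun a b A B u w ha hb hA hB hu1 hu2 hw1 hw2 => ?_⟩
  have hc : 0 < a + b := by linarith
  have hq := w0f_pos hc hA
  have hq' := w0f_pos hb hB
  have hph := phf_pos ha hA hq'.le
  have hqA := w0f_le hc hA
  have hqB := w0f_le hb hB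
  have hqc := w0f_mul_le hc hA
  have hqb := w0f_mul_le hb hB
  have hpq := phf_quarter ha hA hq' hw1.le
  set q := w0f (a + b) A with hqd
  set q' := w0f b B with hqd'
  set ph := phf a A q' with hphd
  have hu : 0 < u := by linarith
  have hw : 0 < w := by linarith
  have huA : u < A := by linarith
  have hwB : w < B := by linarith
  have e1 : A / 2 ≤ A - u := by linarith
  have e2 : 0 < A + w := by linarith
  have e3 : (A + B) / 2 ≤ A + B - u := by linarith
  have e4 : B / 2 ≤ B - w := by linarith
  have e1' : 0 < A - u := by linarith
  have e3' : 0 < A + B - u := by linarith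
  have e4' : 0 < B - w := by linarith
  have ev : 0 < A - u + w := by linarith
  rw [Dn_split hu huA hw hwB]
  set v := A - u + w with hv
  have hE2 := Erk1_nonneg k hk (-a / 2) v
  have hE1 : C1 * (Real.exp (a / 2 * v) / (1 + a * (A + w)) ^ k) ≤ Erk1 k (a / 2) v := by
    refine le_trans ?_ (h1 (a / 2) v (by positivity) ev.le)
    have g : 1 + a / 2 * v ≤ 1 + a * (A + w) := by
      have : a * v ≤ a * (A + w) := mul_le_mul_of_nonneg_left (by linarith) ha.le
      have : 0 < a * v := by positivity
      linarith
    have g2 : (1 + a / 2 * v) ^ k ≤ (1 + a * (A + w)) ^ k :=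
      Real.rpow_le_rpow (by positivity) g hk.le
    refine mul_le_mul_of_nonneg_left ?_ hC1.le
    exact div_le_div_of_nonneg_left (Real.exp_pos _).le (by positivity) g2
  have f1 : (A + w) ^ k = (A + w) * (A + w) ^ (k - 1) := by
    rw [Real.rpow_sub_one e2.ne']; field_simp
  have f2 : (A - u) ^ k = (A - u) * (A - u) ^ (k - 1) := by
    rw [Real.rpow_sub_one e1'.ne']; field_simp
  have f3 : u ^ (k - 1) = u ^ k / u := Real.rpow_sub_one hu.ne' k
  have f4 : w ^ (k - 1) = w ^ k / w := Real.rpow_sub_one hw.ne' k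
  have hpw := phf_pos ha hA hw.le
  have f7 : (phf a A w) ^ k = (A + w) ^ k / (1 + a * (A + w)) ^ k := by
    unfold phf
    rw [Real.div_rpow e2.le (by positivity)]
  have fe : Real.exp (a / 2 * v) * Real.exp (-((a + 2 * b) / 2 * (u + w))) =
      Real.exp (a * A / 2) * Real.exp (-((a + b) * u + b * w)) := by
    rw [← Real.exp_add, ← Real.exp_add]; congr 1; rw [hv]; ring
  have fe2 : Real.exp (-1) ≤ Real.exp (-((a + b) * u + b * w)) := by
    apply Real.exp_le_exp.2
    have : (a + b) * u ≤ (a + b) * (q / 2) := by gcongr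
    have : b * w ≤ b * (q' / 2) := by gcongr
    linarith
  have hpow : (1 / 512) ^ k * ((A + B) * B * ph * A * q * q') ^ k ≤
      (phf a A w * (A - u) * (A + B - u) * (B - w) * u * w) ^ k := by
    rw [← Real.mul_rpow (by norm_num) (by positivity)]
    refine Real.rpow_le_rpow (by positivity) ?_ hk.le
    calc 1 / 512 * ((A + B) * B * ph * A * q * q')
        = (ph / 4) * (A / 2) * ((A + B) / 2) * (B / 2) * (q / 4) * (q' / 4) := by ring
      _ ≤ _ := by gcongr
  have hpow2 : (phf a A w * (A - u) * (A + B - u) * (B - w) * u * w) ^ k =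
      (phf a A w) ^ k * (A - u) ^ k * (A + B - u) ^ k * (B - w) ^ k * u ^ k * w ^ k := by
    rw [Real.mul_rpow (by positivity) (by positivity), Real.mul_rpow (by positivity) (by positivity),
    Real.mul_rpow (by positivity) (by positivity), Real.mul_rpow (by positivity) (by positivity),
    Real.mul_rpow (by positivity) (by positivity)]
  calc _ = C1 * Real.exp (a * A / 2) * Real.exp (-1) *
        (((1 / 512) ^ k * ((A + B) * B * ph * A * q * q') ^ k) / (q * q')) := by ring
    _ ≤ C1 * Real.exp (a * A / 2) * Real.exp (-((a + b) * u + b * w)) *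
        ((phf a A w * (A - u) * (A + B - u) * (B - w) * u * w) ^ k / (u * w)) := by
      have : u ≤ q := by linarith
      have : w ≤ q' := by linarith
      gcongr
    _ = ((A - u) * (A + w) * (C1 * (Real.exp (a / 2 * v) / (1 + a * (A + w)) ^ k)))
        * Real.exp (-((a + 2 * b) / 2 * (u + w))) *
        ((u ^ (k - 1) * (A + w) ^ (k - 1) * (A - u) ^ (k - 1) * w ^ (k - 1)) *
        ((A + B - u) ^ k * (B - w) ^ k)) := by
      rw [hpow2, f7, f1, f2, f3, f4]
      linear_combination (-((A - u) * (A + w) * C1 / (1 + a * (A + w)) ^ k *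
        ((u ^ k / u * (A + w) ^ (k - 1) * (A - u) ^ (k - 1) * (w ^ k / w)) *
        ((A + B - u) ^ k * (B - w) ^ k)))) * fe
    _ ≤ _ := by
      have : 0 ≤ u * w * Erk1 k (-a / 2) v := by positivity
      gcongr
      have g : (A - u) * (A + w) * (C1 * (Real.exp (a / 2 * v) / (1 + a * (A + w)) ^ k)) ≤
        (A - u) * (A + w) * Erk1 k (a / 2) v := by gcongr
      linarith

lemma Dn_integral (k : ℝ) (hk : 0 < k) : ∃ c C : ℝ, 0 < c ∧ 0 < C ∧ ∀ a b A B : ℝ, 0 < a → 0 < b →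
    0 < A → 0 < B →
    c * (Real.exp (a * A / 2) *
      ((A + B) * B * phf a A (w0f b B) * A * w0f (a + b) A * w0f b B) ^ k) ≤
      ∫ w in (0:ℝ)..B, ∫ u in (0:ℝ)..A, Dn k a b A B u w ∧
    ∫ w in (0:ℝ)..B, ∫ u in (0:ℝ)..A, Dn k a b A B u w ≤ C * (Real.exp (a * A / 2) *
      ((A + B) * B * phf a A (w0f b B) * A * w0f (a + b) A * w0f b B) ^ k) := by
  obtain ⟨C1, hC1, h1⟩ := Dn_upper k hk
  obtain ⟨c1, hc1, h2⟩ := Dn_lower k hk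
  have hG := Real.Gamma_pos_of_pos hk
  refine ⟨c1 / 16, C1 * (1 / k + 2 ^ k * Real.Gamma k) * (2 ^ k * Real.Gamma k), by positivity,
    by positivity, fun a b A B ha hb hA hB => ?_⟩
  have hc : 0 < a + b := by linarith
  have hq := w0f_pos hc hA
  have hq' := w0f_pos hb hB
  have hph := phf_pos ha hA hq'.le
  have hqA := w0f_le hc hA
  have hqB := w0f_le hb hB
  have h1' := fun u w => h1 a b A B u w ha hb hA hB
  have h2' := fun u w => h2 a b A B u w ha hb hA hB
  clear h1 h2
  set q := w0f (a + b) A with hqd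
  set q' := w0f b B with hqd'
  set ph := phf a A q' with hphd
  set K := C1 * Real.exp (a * A / 2) * ((A + B) ^ k * B ^ k * ph ^ k) with hK
  have hK0 : 0 < K := by positivity
  have hpow2 : ((A + B) * B * ph * A * q * q') ^ k =
      (A + B) ^ k * B ^ k * ph ^ k * A ^ k * q ^ k * q' ^ k := by
    rw [Real.mul_rpow (by positivity) (by positivity), Real.mul_rpow (by positivity) (by positivity),
    Real.mul_rpow (by positivity) (by positivity), Real.mul_rpow (by positivity) (by positivity),
    Real.mul_rpow (by positivity) (by positivity)]
  set F : ℝ → ℝ := fun u => q ^ k * (A - u) ^ (k - 1) +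
        A ^ k * (u ^ (k - 1) * Real.exp (-(1 / (2 * q) * u))) with hF
  set G : ℝ → ℝ := fun w => w ^ (k - 1) * Real.exp (-(1 / (2 * q') * w)) with hGd
  obtain ⟨pi1, pi2⟩ := aux_pow_int (k := k) (A := A) hk
  obtain ⟨gi1, gi2⟩ := aux_gamma_int (p := k) (r := 1 / (2 * q)) (A := A) hk (by positivity) hA.le
  obtain ⟨gj1, gj2⟩ := aux_gamma_int (p := k) (r := 1 / (2 * q')) (A := B) hk (by positivity) hB.le
  rw [one_div_one_div, Real.mul_rpow two_pos.le hq.le] at gi2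
  rw [one_div_one_div, Real.mul_rpow two_pos.le hq'.le] at gj2
  have hFi : IntervalIntegrable F volume 0 A := (pi1.const_mul _).add (gi1.const_mul _)
  have hFb : ∫ u in (0:ℝ)..A, F u ≤ A ^ k * q ^ k * (1 / k + 2 ^ k * Real.Gamma k) := by
    rw [hF, intervalIntegral.integral_add (pi1.const_mul _) (gi1.const_mul _),
      intervalIntegral.integral_const_mul, intervalIntegral.integral_const_mul, pi2]
    have : A ^ k * (∫ u in (0:ℝ)..A, u ^ (k - 1) * Real.exp (-(1 / (2 * q) * u))) ≤
      A ^ k * (2 ^ k * q ^ k * Real.Gamma k) := by gcongr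
    calc _ ≤ q ^ k * (A ^ k / k) + A ^ k * (2 ^ k * q ^ k * Real.Gamma k) := by linarith
      _ = _ := by ring
  have hGnn : ∀ w ∈ Set.Ioo 0 B, 0 ≤ G w := by
    intro w hw
    have := hw.1
    rw [hGd]; positivity
  have hDnn : ∀ w ∈ Set.Ioo 0 B, ∀ u ∈ Set.Ioo 0 A, 0 ≤ Dn k a b A B u w :=
    fun w hw u hu => Dn_nonneg hk hu.1 hu.2 hw.1 hw.2
  have hDle : ∀ w ∈ Set.Ioo 0 B, ∀ u ∈ Set.Ioo 0 A, Dn k a b A B u w ≤ (K * G w) * F u := by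
    intro w hw u hu
    refine (h1' u w hu.1 hu.2 hw.1 hw.2).trans (le_of_eq ?_)
    simp only [hF, hGd]; ring
  have hDm := Dn_measurable k a b A B
  have hDi : ∀ w ∈ Set.Ioo 0 B, IntervalIntegrable (fun u => Dn k a b A B u w) volume 0 A := by
    intro w hw
    refine aux_integrable hA.le ?_ (hDnn w hw) (hDle w hw) (hFi.const_mul _)
    exact hDm.comp (measurable_id.prodMk measurable_const)
  set I : ℝ → ℝ := fun w => ∫ u in (0:ℝ)..A, Dn k a b A B u w with hI
  have hInn : ∀ w ∈ Set.Ioo 0 B, 0 ≤ I w := fun w hw => aux_ii_nonneg hA.le (hDnn w hw)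
  set K2 := K * (A ^ k * q ^ k * (1 / k + 2 ^ k * Real.Gamma k)) with hK2
  have hK20 : 0 < K2 := by positivity
  have hIle : ∀ w ∈ Set.Ioo 0 B, I w ≤ K2 * G w := by
    intro w hw
    have hg := hGnn w hw
    calc I w ≤ ∫ u in (0:ℝ)..A, (K * G w) * F u :=
          aux_ii_le hA.le (hDnn w hw) (hDle w hw) (hFi.const_mul _)
      _ = (K * G w) * ∫ u in (0:ℝ)..A, F u := by rw [intervalIntegral.integral_const_mul]
      _ ≤ (K * G w) * (A ^ k * q ^ k * (1 / k + 2 ^ k * Real.Gamma k)) := by gcongr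
      _ = _ := by rw [hK2]; ring
  have hIm : Measurable I := by
    have : StronglyMeasurable (fun w : ℝ => ∫ u in Set.Ioc (0:ℝ) A, Dn k a b A B u w) := by
      apply StronglyMeasurable.integral_prod_right (f := fun (w u : ℝ) => Dn k a b A B u w)
      exact (hDm.comp measurable_swap).stronglyMeasurable
    simp only [hI, intervalIntegral.integral_of_le hA.le]
    exact this.measurable
  have hIi : IntervalIntegrable I volume 0 B :=
    aux_integrable hB.le hIm hInn hIle (gj1.const_mul _)
  refine ⟨?_, ?_⟩
  · set m := c1 * Real.exp (a * A / 2) * (((A + B) * B * ph * A * q * q') ^ k / (q * q')) with hm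
    have hlow : ∀ w ∈ Set.Ioo (q' / 4) (q' / 2), m * (q / 2 - q / 4) ≤ I w := by
      intro w hw
      have hw' : w ∈ Set.Ioo 0 B := ⟨by linarith [hw.1], by linarith [hw.2]⟩
      refine aux_ii_ge (by linarith) (by linarith) (by linarith) (hDnn w hw') ?_ (hDi w hw')
      intro u hu
      exact h2' u w hu.1 hu.2 hw.1 hw.2
    have := aux_ii_ge (by linarith) (by linarith) (by linarith) hInn hlow hIi
    refine le_trans (le_of_eq ?_) this
    rw [hm]
    field_simp
    norm_num
  · calc ∫ w in (0:ℝ)..B, I w ≤ ∫ w in (0:ℝ)..B, K2 * G w :=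
          aux_ii_le hB.le hInn hIle (gj1.const_mul _)
      _ = K2 * ∫ w in (0:ℝ)..B, G w := by rw [intervalIntegral.integral_const_mul]
      _ ≤ K2 * (2 ^ k * q' ^ k * Real.Gamma k) := by gcongr
      _ = _ := by rw [hpow2, hK2, hK]; ring

lemma EkA2_eq (k x1 x2 x3 l1 l2 l3 : ℝ) :
    EkA2 k x1 x2 x3 l1 l2 l3 =
    (3 * Real.Gamma (3 * k) / (Vlam l1 l2 l3 ^ (2 * k) * Real.Gamma k ^ 2)) *
      (Real.exp ((x1 + x2 - 2 * x3) * (l1 + l2) / 2) *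
      ∫ w in (0:ℝ)..(l2 - l3), ∫ u in (0:ℝ)..(l1 - l2),
        Dn k (x1 - x2) (x2 - x3) (l1 - l2) (l2 - l3) u w) := by
  unfold EkA2
  congr 1
  set f : ℝ → ℝ → ℝ := fun n2 n1 => ((n1 - l2) * (l1 - n2) * Erk1 k ((x1 - x2) / 2) (n1 - n2)
        + (l1 - n1) * (l2 - n2) * Erk1 k (-(x1 - x2) / 2) (n1 - n2))
      * ((n1 - l3) * (n2 - l3)) * Real.exp ((x1 + x2 - 2 * x3) * (n1 + n2) / 2)
      * Wk k l1 l2 l3 n1 n2 with hf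
  have h1 : ∀ u w, Real.exp ((x1 + x2 - 2 * x3) * (l1 + l2) / 2) *
      Dn k (x1 - x2) (x2 - x3) (l1 - l2) (l2 - l3) u w = f (l2 - w) (l1 - u) := by
    intro u w
    have e1 : Real.exp ((x1 + x2 - 2 * x3) * ((l1 - u) + (l2 - w)) / 2) =
      Real.exp ((x1 + x2 - 2 * x3) * (l1 + l2) / 2) *
      Real.exp (-((x1 - x2 + 2 * (x2 - x3)) / 2 * (u + w))) := by
      rw [← Real.exp_add]; congr 1; ring
    simp only [hf, Dn, Wk]
    rw [e1]
    have e2 : l1 - u - (l2 - w) = l1 - l2 - u + w := by ring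
    have e3 : (l1 - (l1 - u)) * (l1 - (l2 - w)) * (l1 - u - l2) * (l2 - (l2 - w)) * (l1 - u - l3) *
      (l2 - w - l3) = u * (l1 - l2 + w) * (l1 - l2 - u) * w * (l1 - l2 + (l2 - l3) - u) *
      (l2 - l3 - w) := by ring
    rw [e2, e3]
    ring
  rw [← intervalIntegral.integral_const_mul]
  simp only [← intervalIntegral.integral_const_mul, h1]
  have h2 : ∀ w, ∫ u in (0:ℝ)..(l1 - l2), f (l2 - w) (l1 - u) = ∫ n1 in l2..l1, f (l2 - w) n1 := by
    intro w
    rw [intervalIntegral.integral_comp_sub_left (fun n => f (l2 - w) n) l1]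
    simp
  simp only [h2]
  rw [intervalIntegral.integral_comp_sub_left (fun n => ∫ n1 in l2..l1, f n n1) l2]
  rw [sub_zero, sub_sub_cancel]

/-- the product of the three denominators -/
lemma ratio_bound {a b A B : ℝ} (ha : 0 < a) (hb : 0 < b) (hA : 0 < A) (hB : 0 < B) :
    1 / 8 * (1 / ((1 + a * A) * (1 + b * B) * (1 + (a + b) * (A + B)))) ≤
      ((A + B) * B * phf a A (w0f b B) * A * w0f (a + b) A * w0f b B) / (A * (A + B) * B) ^ 2 ∧
    ((A + B) * B * phf a A (w0f b B) * A * w0f (a + b) A * w0f b B) / (A * (A + B) * B) ^ 2 ≤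
     8 * (1 / ((1 + a * A) * (1 + b * B) * (1 + (a + b) * (A + B)))) := by
  obtain ⟨h1, h2⟩ := alg_ineq ha hb hA hB
  have e : ((A + B) * B * phf a A (w0f b B) * A * w0f (a + b) A * w0f b B) / (A * (A + B) * B) ^ 2
      = (A * (1 + b * B) + B) / ((A + B) * (1 + b * B + a * (A * (1 + b * B) + B)) *
        (1 + (a + b) * A) * (1 + b * B)) := by
    have hw : A + w0f b B = (A * (1 + b * B) + B) / (1 + b * B) := by
      unfold w0f; field_simp
    have hp : phf a A (w0f b B) = (A * (1 + b * B) + B) /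
        (1 + b * B + a * (A * (1 + b * B) + B)) := by
      unfold phf
      rw [hw]
      field_simp
    rw [hp]
    unfold w0f
    field_simp
  rw [e]
  constructor
  · rw [← mul_div_assoc, div_le_div_iff₀ (by positivity) (by positivity)]
    have := mul_le_mul_of_nonneg_right h2 (show 0 ≤ 1 + b * B by positivity)
    linarith
  · rw [← mul_div_assoc, div_le_div_iff₀ (by positivity) (by positivity)]
    have := mul_le_mul_of_nonneg_right h1 (show 0 ≤ 1 + b * B by positivity)
    linarith

lemma EkA2_bound (k : ℝ) (hk : 0 < k) : ∃ c C : ℝ, 0 < c ∧ 0 < C ∧ ∀ x1 x2 x3 l1 l2 l3 : ℝ,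
    x2 < x1 → x3 < x2 → l2 < l1 → l3 < l2 →
    c * (Real.exp ((x1 - x3) * l1 + (x2 - x3) * l2) *
      (1 / ((1 + (x1 - x2) * (l1 - l2)) * (1 + (x2 - x3) * (l2 - l3)) *
        (1 + (x1 - x3) * (l1 - l3)))) ^ k) ≤ EkA2 k x1 x2 x3 l1 l2 l3 ∧
    EkA2 k x1 x2 x3 l1 l2 l3 ≤ C * (Real.exp ((x1 - x3) * l1 + (x2 - x3) * l2) *
      (1 / ((1 + (x1 - x2) * (l1 - l2)) * (1 + (x2 - x3) * (l2 - l3)) *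
        (1 + (x1 - x3) * (l1 - l3)))) ^ k) := by
  obtain ⟨c1, C1, hc1, hC1, h⟩ := Dn_integral k hk
  have hG := Real.Gamma_pos_of_pos hk
  have hG3 := Real.Gamma_pos_of_pos (show 0 < 3 * k by linarith)
  refine ⟨3 * Real.Gamma (3 * k) / Real.Gamma k ^ 2 * c1 * (1 / 8) ^ k,
    3 * Real.Gamma (3 * k) / Real.Gamma k ^ 2 * C1 * 8 ^ k, by positivity, by positivity,
    fun x1 x2 x3 l1 l2 l3 hx1 hx2 hl1 hl2 => ?_⟩
  rw [EkA2_eq]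
  obtain ⟨a, ha, rfl⟩ : ∃ a, 0 < a ∧ x1 = x2 + a := ⟨x1 - x2, by linarith, by ring⟩
  obtain ⟨b, hb, rfl⟩ : ∃ b, 0 < b ∧ x2 = x3 + b := ⟨x2 - x3, by linarith, by ring⟩
  obtain ⟨A, hA, rfl⟩ : ∃ a, 0 < a ∧ l1 = l2 + a := ⟨l1 - l2, by linarith, by ring⟩
  obtain ⟨B, hB, rfl⟩ : ∃ b, 0 < b ∧ l2 = l3 + b := ⟨l2 - l3, by linarith, by ring⟩
  have s1 : x3 + b + a - (x3 + b) = a := by ring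
  have s2 : x3 + b - x3 = b := by ring
  have s3 : x3 + b + a - x3 = a + b := by ring
  have s4 : l3 + B + A - (l3 + B) = A := by ring
  have s5 : l3 + B - l3 = B := by ring
  have s6 : l3 + B + A - l3 = A + B := by ring
  unfold Vlam
  rw [s1, s2, s3, s4, s5, s6]
  obtain ⟨hl, hu⟩ := h a b A B ha hb hA hB
  obtain ⟨rl, ru⟩ := ratio_bound ha hb hA hB
  have hw1 := w0f_pos (show 0 < a + b by linarith) hA
  have hw2 := w0f_pos hb hB
  have hw3 := phf_pos ha hA hw2.le
  set M := (A + B) * B * phf a A (w0f b B) * A * w0f (a + b) A * w0f b B with hM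
  have hM0 : 0 < M := by positivity
  set N := (1 / ((1 + a * A) * (1 + b * B) * (1 + (a + b) * (A + B)))) with hN
  have hN0 : 0 < N := by positivity
  set V := A * (A + B) * B with hV
  have hV0 : 0 < V := by positivity
  have hV2 : V ^ (2 * k) = (V ^ 2) ^ k := by
    rw [Real.rpow_mul hV0.le]; norm_num
  have hexp : Real.exp ((x3 + b + a + (x3 + b) - 2 * x3) * (l3 + B + A + (l3 + B)) / 2) *
      Real.exp (a * A / 2) = Real.exp ((a + b) * (l3 + B + A) + b * (l3 + B)) := by
    rw [← Real.exp_add]; congr 1; ring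
  set E0 := Real.exp ((x3 + b + a + (x3 + b) - 2 * x3) * (l3 + B + A + (l3 + B)) / 2) with hE0
  have hE0p : 0 < E0 := Real.exp_pos _
  set J := ∫ w in (0:ℝ)..B, ∫ u in (0:ℝ)..A, Dn k a b A B u w with hJ
  rw [← hexp, hV2]
  set T := Real.exp (a * A / 2)
  have hT : 0 < T := Real.exp_pos _
  have hr : M ^ k / (V ^ 2) ^ k = (M / V ^ 2) ^ k := by
    rw [Real.div_rpow hM0.le (by positivity)]
  have rl' : (1 / 8) ^ k * N ^ k ≤ (M / V ^ 2) ^ k := by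
    rw [← Real.mul_rpow (by norm_num) hN0.le]
    exact Real.rpow_le_rpow (by positivity) rl hk.le
  have ru' : (M / V ^ 2) ^ k ≤ 8 ^ k * N ^ k := by
    rw [← Real.mul_rpow (by norm_num) hN0.le]
    exact Real.rpow_le_rpow (by positivity) ru hk.le
  constructor
  · calc _ = 3 * Real.Gamma (3 * k) / Real.Gamma k ^ 2 * c1 * E0 * T * ((1 / 8) ^ k * N ^ k) := by
          ring
      _ ≤ 3 * Real.Gamma (3 * k) / Real.Gamma k ^ 2 * c1 * E0 * T * ((M / V ^ 2) ^ k) := by gcongr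
      _ = 3 * Real.Gamma (3 * k) / ((V ^ 2) ^ k * Real.Gamma k ^ 2) * (E0 * (c1 * (T * M ^ k))) := by
          rw [← hr]; field_simp
      _ ≤ _ := by gcongr
  · calc _ ≤ 3 * Real.Gamma (3 * k) / ((V ^ 2) ^ k * Real.Gamma k ^ 2) *
            (E0 * (C1 * (T * M ^ k))) := by gcongr
      _ = 3 * Real.Gamma (3 * k) / Real.Gamma k ^ 2 * C1 * E0 * T * ((M / V ^ 2) ^ k) := by
          rw [← hr]; field_simp
      _ ≤ 3 * Real.Gamma (3 * k) / Real.Gamma k ^ 2 * C1 * E0 * T * (8 ^ k * N ^ k) := by gcongr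
      _ = _ := by ring

/-- Corollary 4.3: sharp heat kernel estimate for `X, Y ∈ C⁺`. -/
theorem heat_kernel_estimate_Cplus (k : ℝ) (hk : 0 < k) :
    ∃ C : ℝ, 0 < C ∧ ∀ t x1 x2 x3 y1 y2 y3 : ℝ,
      0 < t →
      x1 + x2 + x3 = 0 → x2 < x1 → x3 < x2 →
      y1 + y2 + y3 = 0 → y2 < y1 → y3 < y2 →
      (C⁻¹ * (t⁻¹ * Real.exp (-((x1 - y1) ^ 2 + (x2 - y2) ^ 2 + (x3 - y3) ^ 2) / (4 * t)) /
            ((t + (x1 - x2) * (y1 - y2)) ^ k * (t + (x2 - x3) * (y2 - y3)) ^ k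
              * (t + (x1 - x3) * (y1 - y3)) ^ k))
        ≤ t ^ (-1 - 3 * k)
            * Real.exp (-(x1 ^ 2 + x2 ^ 2 + x3 ^ 2 + (y1 ^ 2 + y2 ^ 2 + y3 ^ 2)) / (4 * t))
            * EkA2 k x1 x2 x3 (y1 / (2 * t)) (y2 / (2 * t)) (y3 / (2 * t)) ∧
      t ^ (-1 - 3 * k)
            * Real.exp (-(x1 ^ 2 + x2 ^ 2 + x3 ^ 2 + (y1 ^ 2 + y2 ^ 2 + y3 ^ 2)) / (4 * t))
            * EkA2 k x1 x2 x3 (y1 / (2 * t)) (y2 / (2 * t)) (y3 / (2 * t))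
        ≤ C * (t⁻¹ * Real.exp (-((x1 - y1) ^ 2 + (x2 - y2) ^ 2 + (x3 - y3) ^ 2) / (4 * t)) /
            ((t + (x1 - x2) * (y1 - y2)) ^ k * (t + (x2 - x3) * (y2 - y3)) ^ k
              * (t + (x1 - x3) * (y1 - y3)) ^ k))) := by
  obtain ⟨c1, C1, hc1, hC1, h⟩ := EkA2_bound k hk
  refine ⟨max c1⁻¹ (C1 * 8 ^ k), lt_max_of_lt_left (by positivity), ?_⟩
  intro t x1 x2 x3 y1 y2 y3 ht hx hx1 hx2 hy hy1 hy2
  have ht2 : 0 < 2 * t := by linarith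
  obtain ⟨hl, hu⟩ := h x1 x2 x3 (y1 / (2 * t)) (y2 / (2 * t)) (y3 / (2 * t)) hx1 hx2
    (by gcongr) (by gcongr)
  set P := EkA2 k x1 x2 x3 (y1 / (2 * t)) (y2 / (2 * t)) (y3 / (2 * t)) with hP
  set z1 := (x1 - x2) * (y1 - y2) with hz1
  set z2 := (x2 - x3) * (y2 - y3) with hz2
  set z3 := (x1 - x3) * (y1 - y3) with hz3
  have z1p : 0 < z1 := mul_pos (by linarith) (by linarith)
  have z2p : 0 < z2 := mul_pos (by linarith) (by linarith)
  have z3p : 0 < z3 := mul_pos (by linarith) (by linarith)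
  have q1 : (x1 - x2) * (y1 / (2 * t) - y2 / (2 * t)) = z1 / (2 * t) := by rw [hz1]; ring
  have q2 : (x2 - x3) * (y2 / (2 * t) - y3 / (2 * t)) = z2 / (2 * t) := by rw [hz2]; ring
  have q3 : (x1 - x3) * (y1 / (2 * t) - y3 / (2 * t)) = z3 / (2 * t) := by rw [hz3]; ring
  rw [q1, q2, q3] at hl hu
  set N := 1 / ((1 + z1 / (2 * t)) * (1 + z2 / (2 * t)) * (1 + z3 / (2 * t))) with hN
  set D := (t + z1) * (t + z2) * (t + z3) with hD
  have hD0 : 0 < D := by positivity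
  have hN0 : 0 < N := by positivity
  have hDk : (t + z1) ^ k * (t + z2) ^ k * (t + z3) ^ k = D ^ k := by
    rw [hD, Real.mul_rpow (by positivity) (by positivity),
      Real.mul_rpow (by positivity) (by positivity)]
  rw [hDk]
  have hNt : N / t ^ 3 = 1 / ((t + z1 / 2) * (t + z2 / 2) * (t + z3 / 2)) := by
    rw [hN]; field_simp
  have n1 : 1 / D ≤ N / t ^ 3 := by
    rw [hNt, hD]
    gcongr <;> linarith
  have n2 : N / t ^ 3 ≤ 8 * (1 / D) := by
    rw [hNt, hD]
    have : 8 * (1 / ((t + z1) * (t + z2) * (t + z3))) =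
      1 / (((t + z1) / 2) * ((t + z2) / 2) * ((t + z3) / 2)) := by field_simp; norm_num
    rw [this]
    gcongr <;> linarith
  have hDinv : (1 / D) ^ k = 1 / D ^ k := by
    rw [Real.div_rpow zero_le_one hD0.le, Real.one_rpow]
  have n1' : 1 / D ^ k ≤ (N / t ^ 3) ^ k := by
    rw [← hDinv]; exact Real.rpow_le_rpow (by positivity) n1 hk.le
  have n2' : (N / t ^ 3) ^ k ≤ 8 ^ k * (1 / D ^ k) := by
    rw [← hDinv, ← Real.mul_rpow (by norm_num) (by positivity)]
    exact Real.rpow_le_rpow (by positivity) n2 hk.le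
  have htk : t ^ (-1 - 3 * k) = t⁻¹ / (t ^ 3) ^ k := by
    rw [Real.rpow_sub ht, Real.rpow_neg_one, Real.rpow_mul ht.le]; norm_num
  have hNk : (N / t ^ 3) ^ k = N ^ k / (t ^ 3) ^ k := Real.div_rpow hN0.le (by positivity) k
  set S := Real.exp (-(x1 ^ 2 + x2 ^ 2 + x3 ^ 2 + (y1 ^ 2 + y2 ^ 2 + y3 ^ 2)) / (4 * t)) with hS
  set R := Real.exp (-((x1 - y1) ^ 2 + (x2 - y2) ^ 2 + (x3 - y3) ^ 2) / (4 * t)) with hR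
  have hexp : S * Real.exp ((x1 - x3) * (y1 / (2 * t)) + (x2 - x3) * (y2 / (2 * t))) = R := by
    rw [hS, hR, ← Real.exp_add]
    congr 1
    obtain rfl : y3 = -y1 - y2 := by linarith
    field_simp
    ring
  set E := Real.exp ((x1 - x3) * (y1 / (2 * t)) + (x2 - x3) * (y2 / (2 * t)))
  have hSp : 0 < S := Real.exp_pos _
  have hRp : 0 < R := Real.exp_pos _
  rw [htk]
  constructor
  · have hm : (max c1⁻¹ (C1 * 8 ^ k))⁻¹ ≤ c1 := by
      rw [inv_le_comm₀ (lt_max_of_lt_left (by positivity)) hc1]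
      exact le_max_left _ _
    calc _ ≤ c1 * (t⁻¹ * R / D ^ k) := by gcongr
      _ = c1 * t⁻¹ * R * (1 / D ^ k) := by ring
      _ ≤ c1 * t⁻¹ * R * (N / t ^ 3) ^ k := by gcongr
      _ = t⁻¹ / (t ^ 3) ^ k * S * (c1 * (E * N ^ k)) := by
        rw [hNk, ← hexp]; ring
      _ ≤ _ := by gcongr
  · calc _ ≤ t⁻¹ / (t ^ 3) ^ k * S * (C1 * (E * N ^ k)) := by gcongr
      _ = C1 * t⁻¹ * R * (N / t ^ 3) ^ k := by
        rw [hNk, ← hexp]; ring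
      _ ≤ C1 * t⁻¹ * R * (8 ^ k * (1 / D ^ k)) := by gcongr
      _ = (C1 * 8 ^ k) * (t⁻¹ * R / D ^ k) := by ring
      _ ≤ _ := by
        gcongr
        exact le_max_right _ _
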